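/- There is an isomorphism of superalgebras φ: S(n) ⊗ C(n) → W(n) such that φ(1 ⊗ c_i) = c_i for i = 1,…,n and φ(t_j ⊗ 1) = (1/√(−2)) s_j(c_j − c_{j+1}) for j = 1,…,n−1, where √(−2) is a fixed square root of −2 in F. -/

import Mathlib

set_option maxHeartbeats 1000000

namespace HC

/-- Generators of the affine Hecke–Clifford superalgebra `H_n`. -/
inductive Gen (n : ℕ) : Type
  | X : Fin n → Gen n
  | Xinv : Fin n → Gen n
  | C : Fin n → Gen n
  | T : Fin (n - 1) → Gen n

/-- The node `i` of `Fin n`, for `i : Fin (n-1)` (1-based: the node `i`). -/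
def lo {n : ℕ} (i : Fin (n - 1)) : Fin n :=
  ⟨i.val, by have := i.isLt; omega⟩

/-- The node `i+1` of `Fin n`, for `i : Fin (n-1)`. -/
def hi {n : ℕ} (i : Fin (n - 1)) : Fin n :=
  ⟨i.val + 1, by have := i.isLt; omega⟩

variable (F : Type) [Field F]

/-- The free algebra on the generators. -/
abbrev FA (n : ℕ) : Type := FreeAlgebra F (Gen n)

noncomputable def fx {n : ℕ} (i : Fin n) : FA F n := FreeAlgebra.ι F (Gen.X i)
noncomputable def fxinv {n : ℕ} (i : Fin n) : FA F n := FreeAlgebra.ι F (Gen.Xinv i)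
noncomputable def fc {n : ℕ} (i : Fin n) : FA F n := FreeAlgebra.ι F (Gen.C i)
noncomputable def ft {n : ℕ} (i : Fin (n - 1)) : FA F n := FreeAlgebra.ι F (Gen.T i)

/-- The defining relations of the affine Hecke–Clifford superalgebra, with parameter
`q` and `ξ = q - q⁻¹`. -/
inductive Rel (q : F) (n : ℕ) : FA F n → FA F n → Prop
  | XXinv (i : Fin n) : Rel q n (fx F i * fxinv F i) 1
  | XinvX (i : Fin n) : Rel q n (fxinv F i * fx F i) 1
  | XX (i j : Fin n) : Rel q n (fx F i * fx F j) (fx F j * fx F i)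
  | XiXi (i j : Fin n) : Rel q n (fxinv F i * fxinv F j) (fxinv F j * fxinv F i)
  | XXi (i j : Fin n) (h : i ≠ j) : Rel q n (fx F i * fxinv F j) (fxinv F j * fx F i)
  | CC (i : Fin n) : Rel q n (fc F i * fc F i) 1
  | Canti (i j : Fin n) (h : i ≠ j) : Rel q n (fc F i * fc F j) (-(fc F j * fc F i))
  | CX (i : Fin n) : Rel q n (fc F i * fx F i) (fxinv F i * fc F i)
  | CXi (i : Fin n) : Rel q n (fc F i * fxinv F i) (fx F i * fc F i)
  | CXo (i j : Fin n) (h : i ≠ j) : Rel q n (fc F i * fx F j) (fx F j * fc F i)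
  | CXio (i j : Fin n) (h : i ≠ j) : Rel q n (fc F i * fxinv F j) (fxinv F j * fc F i)
  | Tquad (i : Fin (n - 1)) : Rel q n (ft F i * ft F i) ((q - q⁻¹) • ft F i + 1)
  | Tbraid (i j : Fin (n - 1)) (h : (j : ℕ) = (i : ℕ) + 1) :
      Rel q n (ft F i * ft F j * ft F i) (ft F j * ft F i * ft F j)
  | TTfar (i j : Fin (n - 1)) (h : (i : ℕ) + 1 < (j : ℕ)) :
      Rel q n (ft F i * ft F j) (ft F j * ft F i)
  | TC (i : Fin (n - 1)) : Rel q n (ft F i * fc F (lo i)) (fc F (hi i) * ft F i)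
  | TCo (i : Fin (n - 1)) (j : Fin n) (h1 : j ≠ lo i) (h2 : j ≠ hi i) :
      Rel q n (ft F i * fc F j) (fc F j * ft F i)
  | TXo (i : Fin (n - 1)) (j : Fin n) (h1 : j ≠ lo i) (h2 : j ≠ hi i) :
      Rel q n (ft F i * fx F j) (fx F j * ft F i)
  | TXio (i : Fin (n - 1)) (j : Fin n) (h1 : j ≠ lo i) (h2 : j ≠ hi i) :
      Rel q n (ft F i * fxinv F j) (fxinv F j * ft F i)
  | cross (i : Fin (n - 1)) :
      Rel q n ((ft F i + (q - q⁻¹) • (fc F (lo i) * fc F (hi i))) * fx F (lo i) * ft F i)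
        (fx F (hi i))

/-- The affine Hecke–Clifford superalgebra `H_n` over `F` with parameter `q`. -/
abbrev H (q : F) (n : ℕ) : Type := RingQuot (Rel F q n)

noncomputable def X (q : F) {n : ℕ} (i : Fin n) : H F q n :=
  RingQuot.mkAlgHom F (Rel F q n) (fx F i)

noncomputable def Xinv (q : F) {n : ℕ} (i : Fin n) : H F q n :=
  RingQuot.mkAlgHom F (Rel F q n) (fxinv F i)

noncomputable def C (q : F) {n : ℕ} (i : Fin n) : H F q n :=
  RingQuot.mkAlgHom F (Rel F q n) (fc F i)

noncomputable def T (q : F) {n : ℕ} (i : Fin (n - 1)) : H F q n :=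
  RingQuot.mkAlgHom F (Rel F q n) (ft F i)

/-- `q` is either a primitive root of unity of odd order (including `q = 1`)
or not a root of unity at all (and `q ≠ 0`). -/
def GoodParam (q : F) : Prop :=
  q ≠ 0 ∧ ((∃ m : ℕ, Odd m ∧ IsPrimitiveRoot q m) ∨ ∀ m : ℕ, 0 < m → q ^ m ≠ 1)

/-- `X_i^a` for an integer exponent `a ∈ ℤ`. -/
noncomputable def XZ (q : F) {n : ℕ} (i : Fin n) (a : ℤ) : H F q n :=
  if 0 ≤ a then X F q i ^ a.toNat else Xinv F q i ^ (-a).toNat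

/-- The monomial `X^α = X_1^{α_1} ⋯ X_n^{α_n}` for `α ∈ ℤ^n`. -/
noncomputable def Xmon (q : F) {n : ℕ} (α : Fin n → ℤ) : H F q n :=
  ((List.finRange n).map fun i => XZ F q i (α i)).prod

/-- The monomial `C^β = C_1^{β_1} ⋯ C_n^{β_n}` for `β ∈ {0,1}^n`. -/
noncomputable def Cmon (q : F) {n : ℕ} (β : Fin n → Bool) : H F q n :=
  ((List.finRange n).map fun i => if β i then C F q i else 1).prod

/-- The basic transposition `s_i = (i, i+1)` of `S_n`. -/
def s {n : ℕ} (i : Fin (n - 1)) : Equiv.Perm (Fin n) := Equiv.swap (lo i) (hi i)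

/-- The Coxeter length (number of inversions) of a permutation of `Fin n`. -/
def len {n : ℕ} (w : Equiv.Perm (Fin n)) : ℕ :=
  ((Finset.univ : Finset (Fin n × Fin n)).filter fun p => p.1 < p.2 ∧ w p.2 < w p.1).card

/-- `Tw` is the family of standard basis elements `T_w`, `w ∈ S_n`: it satisfies
`T_1 = 1`, `T_{s_i} = T_i`, and `T_{s_i w} = T_i T_w` whenever `ℓ(s_i w) = ℓ(w) + 1`.
These conditions determine the family uniquely. -/
def IsTFam (q : F) {n : ℕ} (Tw : Equiv.Perm (Fin n) → H F q n) : Prop :=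
  Tw 1 = 1 ∧ (∀ i : Fin (n - 1), Tw (s i) = T F q i) ∧
    ∀ (i : Fin (n - 1)) (w : Equiv.Perm (Fin n)),
      len (s i * w) = len w + 1 → Tw (s i * w) = T F q i * Tw w

/-- `h` is the quantum characteristic of `q`:  the smallest positive integer with
`q^{1-h} + q^{3-h} + ⋯ + q^{h-1} = 0`. -/
def qcharEq (q : F) (h : ℕ) : Prop :=
  0 < h ∧ (∑ k ∈ Finset.range h, q ^ (1 - (h : ℤ) + 2 * (k : ℤ))) = 0 ∧
    ∀ h' : ℕ, 0 < h' → h' < h →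
      (∑ k ∈ Finset.range h', q ^ (1 - (h' : ℤ) + 2 * (k : ℤ))) ≠ 0

/-- `i ∈ I = {0, 1, …, ℓ}` where `ℓ = (h-1)/2` (no condition if the quantum
characteristic is infinite). -/
def memI (q : F) (i : ℕ) : Prop := ∀ h : ℕ, qcharEq F q h → 2 * i + 1 ≤ h

/-- `q(i) = 2(q^{2i+1} + q^{-2i-1})/(q + q⁻¹)`. -/
noncomputable def qres (q : F) (i : ℕ) : F :=
  2 * (q ^ (2 * i + 1) + q⁻¹ ^ (2 * i + 1)) / (q + q⁻¹)

/-- Index of the block containing position `k` (0-based), for a composition given as a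
list of parts. -/
def blk : List ℕ → ℕ → ℕ
  | [], _ => 0
  | a :: rest, k => if k < a then 0 else blk rest (k - a) + 1

/-- Membership in the Young subgroup `S_μ ⊆ S_n`. -/
def InYoung {n : ℕ} (μ : List ℕ) (w : Equiv.Perm (Fin n)) : Prop :=
  ∀ k : Fin n, blk μ (w k).val = blk μ k.val

/-- `μ` is a composition of `n`. -/
def IsComposition (μ : List ℕ) (n : ℕ) : Prop := (∀ a ∈ μ, 0 < a) ∧ μ.sum = n

/-- The parabolic subalgebra generated by all `X_i^{±1}`, `C_i`, and the `T_j` with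
`j` in a set `J` of admissible indices. -/
def parabolicJ (q : F) {n : ℕ} (J : Set (Fin (n - 1))) : Subalgebra F (H F q n) :=
  Algebra.adjoin F
    ((Set.range fun i : Fin n => X F q i) ∪ (Set.range fun i : Fin n => Xinv F q i) ∪
      (Set.range fun i : Fin n => C F q i) ∪ {h | ∃ j ∈ J, h = T F q j})

/-- The parabolic subalgebra `H_μ` for a composition `μ`. -/
def parabolicC (q : F) {n : ℕ} (μ : List ℕ) : Subalgebra F (H F q n) :=
  parabolicJ F q {j | InYoung μ (s j)}

/-- The classical parabolic subalgebra `H^cl_μ`, generated by the `T_j` with `s_j ∈ S_μ`. -/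
def clparC (q : F) {n : ℕ} (μ : List ℕ) : Subalgebra F (H F q n) :=
  Algebra.adjoin F {h | ∃ j : Fin (n - 1), InYoung μ (s j) ∧ h = T F q j}

/-- The finite Hecke–Clifford subalgebra `H^fn_n`, generated by all `C_i` and `T_j`. -/
def Hfin (q : F) (n : ℕ) : Subalgebra F (H F q n) :=
  Algebra.adjoin F
    ((Set.range fun i : Fin n => C F q i) ∪ {h | ∃ j : Fin (n - 1), h = T F q j})

/-- `x` is a minimal length `(S_μ, S_ν)`-double coset representative. -/
def IsMinDC {n : ℕ} (μ ν : List ℕ) (x : Equiv.Perm (Fin n)) : Prop :=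
  ∀ u v : Equiv.Perm (Fin n), InYoung μ u → InYoung ν v → len x ≤ len (u * x * v)

/-- `w ∈ S_μ x S_ν`. -/
def InDC {n : ℕ} (μ ν : List ℕ) (x w : Equiv.Perm (Fin n)) : Prop :=
  ∃ u v : Equiv.Perm (Fin n), InYoung μ u ∧ InYoung ν v ∧ w = u * x * v

/-- A covering step in the Bruhat order: multiplication by a reflection increasing length. -/
def BruhatStep {n : ℕ} (v w : Equiv.Perm (Fin n)) : Prop :=
  ∃ a b : Fin n, a ≠ b ∧ w = Equiv.swap a b * v ∧ len v < len w

/-- The Bruhat order on `S_n`. -/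
def BruhatLE {n : ℕ} : Equiv.Perm (Fin n) → Equiv.Perm (Fin n) → Prop :=
  Relation.ReflTransGen BruhatStep

/-- The space of `A`-equivariant linear maps between two representations of the
`F`-algebra `A`. -/
def eqvHoms {A : Type} [Ring A] [Algebra F A] {M N : Type}
    [AddCommGroup M] [Module F M] [AddCommGroup N] [Module F N]
    (ρM : A →ₐ[F] Module.End F M) (ρN : A →ₐ[F] Module.End F N) :
    Submodule F (M →ₗ[F] N) where
  carrier := {f | ∀ (x : A) (m : M), f (ρM x m) = ρN x (f m)}
  add_mem' := by
    intro f g hf hg x m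
    simp only [LinearMap.add_apply, hf x m, hg x m, map_add]
  zero_mem' := by
    intro x m
    simp only [LinearMap.zero_apply, map_zero]
  smul_mem' := by
    intro c f hf x m
    simp only [LinearMap.smul_apply, hf x m, map_smul]

/-- `(E, ρE, ι)` is the module induced along the algebra morphism `φ : B →ₐ A` from
the `B`-representation `(M, ρ)`, i.e. `E = A ⊗_B M`, characterized by its universal
property. -/
def IsInducedAlong {A B : Type} [Ring A] [Ring B] [Algebra F A] [Algebra F B]
    (φ : B →ₐ[F] A) {M : Type} [AddCommGroup M] [Module F M]
    (ρ : B →ₐ[F] Module.End F M) {E : Type} [AddCommGroup E] [Module F E]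
    (ρE : A →ₐ[F] Module.End F E) (ι : M →ₗ[F] E) : Prop :=
  (∀ (b : B) (m : M), ι (ρ b m) = ρE (φ b) (ι m)) ∧
    ∀ (P : Type) [AddCommGroup P] [Module F P],
      ∀ (ρP : A →ₐ[F] Module.End F P) (f : M →ₗ[F] P),
        (∀ (b : B) (m : M), f (ρ b m) = ρP (φ b) (f m)) →
        ∃! g : E →ₗ[F] P,
          (∀ (x : A) (e : E), g (ρE x e) = ρP x (g e)) ∧ ∀ m : M, g (ι m) = f m

/-- `δ` is the grading automorphism of the superalgebra `H_n`
(identity on even generators, `-1` on the odd generators `C_i`). -/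
def IsGradingAut (q : F) {n : ℕ} (δ : H F q n →ₐ[F] H F q n) : Prop :=
  (∀ i : Fin n, δ (X F q i) = X F q i) ∧ (∀ i : Fin n, δ (Xinv F q i) = Xinv F q i) ∧
    (∀ i : Fin n, δ (C F q i) = -C F q i) ∧ ∀ i : Fin (n - 1), δ (T F q i) = T F q i

/-- `τ` is the antiautomorphism of `H_n` with `τ(T_i) = T_i + ξ C_i C_{i+1}`,
`τ(C_j) = C_j`, `τ(X_j) = X_j`. -/
def IsTauAntiAut (q : F) {n : ℕ} (τ : H F q n →ₗ[F] H F q n) : Prop :=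
  Function.Bijective τ ∧ (∀ a b : H F q n, τ (a * b) = τ b * τ a) ∧ τ 1 = 1 ∧
    (∀ i : Fin (n - 1),
      τ (T F q i) = T F q i + (q - q⁻¹) • (C F q (lo i) * C F q (hi i))) ∧
    (∀ j : Fin n, τ (C F q j) = C F q j) ∧ (∀ j : Fin n, τ (X F q j) = X F q j) ∧
    ∀ j : Fin n, τ (Xinv F q j) = Xinv F q j

/-- `ρ'` is the representation of the subalgebra `B` obtained from the
`H_ν`-representation `ρν` by twisting with the isomorphism `φ_{x⁻¹}`
(determined by `X_i ↦ X_{x⁻¹ i}`, `C_i ↦ C_{x⁻¹ i}`, `T_w ↦ T_{x⁻¹ w x}`). -/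
def IsTwistedRep (q : F) {n : ℕ} (ν : List ℕ) (x : Equiv.Perm (Fin n))
    (B : Subalgebra F (H F q n)) {M : Type} [AddCommGroup M] [Module F M]
    (ρν : ↥(parabolicC F q (n := n) ν) →ₐ[F] Module.End F M)
    (ρ' : ↥B →ₐ[F] Module.End F M) : Prop :=
  (∀ (i : Fin n) (a : ↥B) (b : ↥(parabolicC F q (n := n) ν)),
      (a : H F q n) = X F q i → (b : H F q n) = X F q (x⁻¹ i) → ρ' a = ρν b) ∧
  (∀ (i : Fin n) (a : ↥B) (b : ↥(parabolicC F q (n := n) ν)),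
      (a : H F q n) = Xinv F q i → (b : H F q n) = Xinv F q (x⁻¹ i) → ρ' a = ρν b) ∧
  (∀ (i : Fin n) (a : ↥B) (b : ↥(parabolicC F q (n := n) ν)),
      (a : H F q n) = C F q i → (b : H F q n) = C F q (x⁻¹ i) → ρ' a = ρν b) ∧
  ∀ (j j' : Fin (n - 1)) (a : ↥B) (b : ↥(parabolicC F q (n := n) ν)),
      lo j' = x⁻¹ (lo j) → (a : H F q n) = T F q j → (b : H F q n) = T F q j' → ρ' a = ρν b

/-- The element `f = a_d X_1^d + ⋯ + a_1 X_1 + a_0` of `H_n`. -/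
noncomputable def felem (q : F) (n d : ℕ) (aa : ℕ → F) : H F q n :=
  if h : 0 < n then ∑ i ∈ Finset.range (d + 1), aa i • X F q (⟨0, h⟩ : Fin n) ^ i else 0

/-- The conditions on the coefficients of `f`: degree `d ≥ 1`, monic, and
`a_i = a_0 a_{d-i}`. -/
def GoodPoly (d : ℕ) (aa : ℕ → F) : Prop :=
  1 ≤ d ∧ aa d = 1 ∧ (∀ i ≤ d, aa i = aa 0 * aa (d - i)) ∧ ∀ i : ℕ, d < i → aa i = 0

/-- The relation generating the two-sided ideal `I_f` of `H_n`. -/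
inductive CycRel (q : F) (n d : ℕ) (aa : ℕ → F) : H F q n → H F q n → Prop
  | rel : CycRel q n d aa (felem F q n d aa) 0

/-- The cyclotomic Hecke–Clifford superalgebra `H_n^f = H_n / I_f`. -/
abbrev Hf (q : F) (n d : ℕ) (aa : ℕ → F) : Type := RingQuot (CycRel F q n d aa)

/-- The canonical quotient map `H_n → H_n^f`. -/
noncomputable def cyc (q : F) (n d : ℕ) (aa : ℕ → F) : H F q n →ₐ[F] Hf F q n d aa :=
  RingQuot.mkAlgHom F (CycRel F q n d aa)

noncomputable def Xf (q : F) (n d : ℕ) (aa : ℕ → F) (i : Fin n) : Hf F q n d aa :=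
  cyc F q n d aa (X F q i)
noncomputable def Xinvf (q : F) (n d : ℕ) (aa : ℕ → F) (i : Fin n) : Hf F q n d aa :=
  cyc F q n d aa (Xinv F q i)
noncomputable def Cf (q : F) (n d : ℕ) (aa : ℕ → F) (i : Fin n) : Hf F q n d aa :=
  cyc F q n d aa (C F q i)
noncomputable def Tf (q : F) (n d : ℕ) (aa : ℕ → F) (i : Fin (n - 1)) : Hf F q n d aa :=
  cyc F q n d aa (T F q i)

/-- `e` is the canonical embedding `H_k^f → H_N^f` (shifting all indices by `sh`;
for `sh = 0` this is the standard identification of `H_k^f` with a subalgebra of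
`H_N^f`). -/
def IsCycEmb (q : F) (k N d : ℕ) (aa : ℕ → F) (sh : ℕ)
    (e : Hf F q k d aa →ₐ[F] Hf F q N d aa) : Prop :=
  (∀ (i : Fin k) (i' : Fin N), (i' : ℕ) = sh + (i : ℕ) →
      e (Xf F q k d aa i) = Xf F q N d aa i') ∧
  (∀ (i : Fin k) (i' : Fin N), (i' : ℕ) = sh + (i : ℕ) →
      e (Xinvf F q k d aa i) = Xinvf F q N d aa i') ∧
  (∀ (i : Fin k) (i' : Fin N), (i' : ℕ) = sh + (i : ℕ) →
      e (Cf F q k d aa i) = Cf F q N d aa i') ∧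
  ∀ (j : Fin (k - 1)) (j' : Fin (N - 1)), (j' : ℕ) = sh + (j : ℕ) →
      e (Tf F q k d aa j) = Tf F q N d aa j'

/-- `δ` is the grading automorphism of the superalgebra `H_n^f`. -/
def IsCycGrading (q : F) (n d : ℕ) (aa : ℕ → F)
    (δ : Hf F q n d aa →ₐ[F] Hf F q n d aa) : Prop :=
  (∀ i : Fin n, δ (Xf F q n d aa i) = Xf F q n d aa i) ∧
  (∀ i : Fin n, δ (Xinvf F q n d aa i) = Xinvf F q n d aa i) ∧
  (∀ i : Fin n, δ (Cf F q n d aa i) = -Cf F q n d aa i) ∧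
  ∀ j : Fin (n - 1), δ (Tf F q n d aa j) = Tf F q n d aa j

/-- The elements `f_1 = f`, `f_{i+1} = (T_i + ξ C_i C_{i+1}) f_i T_i` of `H_n`
(0-based indexing: `fseq k = f_{k+1}`). -/
noncomputable def fseq (q : F) (n d : ℕ) (aa : ℕ → F) : ℕ → H F q n
  | 0 => felem F q n d aa
  | k + 1 =>
    if h : k < n - 1 then
      (T F q (⟨k, h⟩ : Fin (n - 1)) +
          (q - q⁻¹) • (C F q (lo (⟨k, h⟩ : Fin (n - 1))) *
            C F q (hi (⟨k, h⟩ : Fin (n - 1))))) *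
        fseq q n d aa k * T F q (⟨k, h⟩ : Fin (n - 1))
    else 0

/-- `f_Z = f_{z_1} ⋯ f_{z_u}` for `Z = {z_1 < ⋯ < z_u} ⊆ {1,…,n}` (0-based). -/
noncomputable def fZ (q : F) (n d : ℕ) (aa : ℕ → F) (Z : Finset (Fin n)) : H F q n :=
  ((Z.sort (· ≤ ·)).map fun z => fseq F q n d aa (z : ℕ)).prod

/-- Generators of the twisted group algebra `S(n) ⊗ C(n)` (super tensor product):
odd generators `t_1, …, t_{n-1}` and `c_1, …, c_n`. -/
inductive SCGen (n : ℕ) : Type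
  | t : Fin (n - 1) → SCGen n
  | c : Fin n → SCGen n

/-- Generators of the Sergeev superalgebra `W(n)`: even generators `s_1, …, s_{n-1}`
and odd generators `c_1, …, c_n`. -/
inductive WGen (n : ℕ) : Type
  | s : Fin (n - 1) → WGen n
  | c : Fin n → WGen n

noncomputable def sct {n : ℕ} (i : Fin (n - 1)) : FreeAlgebra F (SCGen n) :=
  FreeAlgebra.ι F (SCGen.t i)
noncomputable def scc {n : ℕ} (i : Fin n) : FreeAlgebra F (SCGen n) :=
  FreeAlgebra.ι F (SCGen.c i)
noncomputable def ws {n : ℕ} (i : Fin (n - 1)) : FreeAlgebra F (WGen n) :=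
  FreeAlgebra.ι F (WGen.s i)
noncomputable def wc {n : ℕ} (i : Fin n) : FreeAlgebra F (WGen n) :=
  FreeAlgebra.ι F (WGen.c i)

/-- The defining relations of `S(n) ⊗ C(n)`: the `t_i` satisfy `t_i² = 1`, the braid
relations and `t_i t_j = -t_j t_i` for `|i-j| > 1` (relations of the twisted group
algebra `S(n)`); the `c_i` satisfy the Clifford relations (relations of `C(n)`); and,
by the sign rule of the super tensor product of superalgebras applied to the odd
elements `t_i ⊗ 1` and `1 ⊗ c_j`, the mixed relations `t_i c_j = -c_j t_i`. -/
inductive SCRel (n : ℕ) : FreeAlgebra F (SCGen n) → FreeAlgebra F (SCGen n) → Prop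
  | tt (i : Fin (n - 1)) : SCRel n (sct F i * sct F i) 1
  | tbraid (i j : Fin (n - 1)) (h : (j : ℕ) = (i : ℕ) + 1) :
      SCRel n (sct F i * sct F j * sct F i) (sct F j * sct F i * sct F j)
  | tfar (i j : Fin (n - 1)) (h : (i : ℕ) + 1 < (j : ℕ)) :
      SCRel n (sct F i * sct F j) (-(sct F j * sct F i))
  | cc (i : Fin n) : SCRel n (scc F i * scc F i) 1
  | canti (i j : Fin n) (h : i ≠ j) :
      SCRel n (scc F i * scc F j) (-(scc F j * scc F i))
  | tc (i : Fin (n - 1)) (j : Fin n) :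
      SCRel n (sct F i * scc F j) (-(scc F j * sct F i))

/-- The defining relations of the Sergeev superalgebra `W(n)`. -/
inductive WRel (n : ℕ) : FreeAlgebra F (WGen n) → FreeAlgebra F (WGen n) → Prop
  | ss (i : Fin (n - 1)) : WRel n (ws F i * ws F i) 1
  | sbraid (i j : Fin (n - 1)) (h : (j : ℕ) = (i : ℕ) + 1) :
      WRel n (ws F i * ws F j * ws F i) (ws F j * ws F i * ws F j)
  | sfar (i j : Fin (n - 1)) (h : (i : ℕ) + 1 < (j : ℕ)) :
      WRel n (ws F i * ws F j) (ws F j * ws F i)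
  | cc (i : Fin n) : WRel n (wc F i * wc F i) 1
  | canti (i j : Fin n) (h : i ≠ j) :
      WRel n (wc F i * wc F j) (-(wc F j * wc F i))
  | sclo (i : Fin (n - 1)) : WRel n (ws F i * wc F (lo i)) (wc F (hi i) * ws F i)
  | schi (i : Fin (n - 1)) : WRel n (ws F i * wc F (hi i)) (wc F (lo i) * ws F i)
  | sco (i : Fin (n - 1)) (j : Fin n) (h1 : j ≠ lo i) (h2 : j ≠ hi i) :
      WRel n (ws F i * wc F j) (wc F j * ws F i)

/-- The super tensor product `S(n) ⊗ C(n)`, presented by generators and relations. -/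
abbrev SC (n : ℕ) : Type := RingQuot (SCRel F n)

/-- The Sergeev superalgebra `W(n)`. -/
abbrev W (n : ℕ) : Type := RingQuot (WRel F n)

noncomputable def tS (n : ℕ) (i : Fin (n - 1)) : SC F n :=
  RingQuot.mkAlgHom F (SCRel F n) (sct F i)
noncomputable def cS (n : ℕ) (i : Fin n) : SC F n :=
  RingQuot.mkAlgHom F (SCRel F n) (scc F i)
noncomputable def sW (n : ℕ) (i : Fin (n - 1)) : W F n :=
  RingQuot.mkAlgHom F (WRel F n) (ws F i)
noncomputable def cW (n : ℕ) (i : Fin n) : W F n :=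
  RingQuot.mkAlgHom F (WRel F n) (wc F i)

section Identities

variable {R : Type*} [Ring R]

theorem sub_mul_self_of_anticomm {a b : R} (ha : a * a = 1) (hb : b * b = 1)
    (hab : a * b = -(b * a)) : (a - b) * (a - b) = 2 := by
  simp only [sub_mul, mul_sub, ha, hb, hab]
  rw [← one_add_one_eq_two]
  noncomm_ring

theorem sub_mul_sub_of_anticomm {a b c : R} (hb : b * b = 1) (hab : a * b = -(b * a))
    (hac : a * c = -(c * a)) (hbc : b * c = -(c * b)) :
    (a - b) * (b - c) = -2 - (b - c) * (a - b) := by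
  simp only [sub_mul, mul_sub, hb, hab, hac, hbc]
  rw [← one_add_one_eq_two]
  noncomm_ring

theorem sub_mul_sub_of_anticomm_disjoint {a b c d : R} (hac : a * c = -(c * a))
    (had : a * d = -(d * a)) (hbc : b * c = -(c * b)) (hbd : b * d = -(d * b)) :
    (a - b) * (c - d) = -((c - d) * (a - b)) := by
  simp only [sub_mul, mul_sub, hac, had, hbc, hbd]
  noncomm_ring

/-- Multiplying two braiding reflections by their roots preserves the braid relation. -/
theorem braid_of_reflections {s u x y : R} (hbraid : s * u * s = u * s * u)
    (hx : x * x = 2) (hy : y * y = 2) (hxu : x * u = u * (x + y)) (hys : y * s = s * (x + y))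
    (hs : (x + y) * s = s * y) (hu : (x + y) * u = u * x) :
    s * x * (u * y) * (s * x) = u * y * (s * x) * (u * y) := by
  have hl : s * x * (u * y) * (s * x) = s * u * s * (y * (x + y) * x) := by
    calc s * x * (u * y) * (s * x) = s * (x * u) * (y * s) * x := by simp only [mul_assoc]
      _ = s * u * ((x + y) * s) * (x + y) * x := by rw [hxu, hys]; simp only [mul_assoc]
      _ = _ := by rw [hs]; simp only [mul_assoc]
  have hr : u * y * (s * x) * (u * y) = u * s * u * (x * (x + y) * y) := by
    calc u * y * (s * x) * (u * y) = u * (y * s) * (x * u) * y := by simp only [mul_assoc]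
      _ = u * s * ((x + y) * u) * (x + y) * y := by rw [hxu, hys]; simp only [mul_assoc]
      _ = _ := by rw [hu]; simp only [mul_assoc]
  have hxy : y * (x + y) * x = x * (x + y) * y := by
    calc y * (x + y) * x = y * (x * x) + y * y * x := by noncomm_ring
      _ = x * x * y + x * (y * y) := by rw [hx, hy]; noncomm_ring
      _ = _ := by noncomm_ring
  rw [hl, hr, hbraid, hxy]

/-- Multiplying two braiding elements by roots which anticommute with them preserves the
braid relation. -/
theorem braid_of_anticomm {s u x y : R} (hbraid : s * u * s = u * s * u)
    (hx : x * x = 2) (hy : y * y = 2) (hxy : x * y = -2 - y * x)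
    (hxs : x * s = -(s * x)) (hxu : x * u = -(u * x))
    (hys : y * s = -(s * y)) (hyu : y * u = -(u * y)) :
    s * x * (u * y) * (s * x) = u * y * (s * x) * (u * y) := by
  have hl : s * x * (u * y) * (s * x) = -(s * u * s * (x * y * x)) := by
    calc s * x * (u * y) * (s * x) = s * (x * u) * (y * s) * x := by simp only [mul_assoc]
      _ = s * u * (x * s) * y * x := by rw [hxu, hys]; noncomm_ring
      _ = _ := by rw [hxs]; noncomm_ring
  have hr : u * y * (s * x) * (u * y) = -(u * s * u * (y * x * y)) := by
    calc u * y * (s * x) * (u * y) = u * (y * s) * (x * u) * y := by simp only [mul_assoc]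
      _ = u * s * (y * u) * x * y := by rw [hxu, hys]; noncomm_ring
      _ = _ := by rw [hyu]; noncomm_ring
  have hxyx : x * y * x = y * x * y := by
    calc x * y * x = -2 * x - y * (x * x) := by rw [hxy]; noncomm_ring
      _ = y * (-2 - y * x) + (y * y - 2) * x := by rw [hx]; noncomm_ring
      _ = _ := by rw [← hxy, hy, sub_self, zero_mul, add_zero, mul_assoc]
  rw [hl, hr, hbraid, hxyx]

end Identities

theorem hi_ne_lo {n : ℕ} (i : Fin (n - 1)) : hi i ≠ lo i := by
  simp [hi, lo, Fin.ext_iff]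

theorem lo_eq_hi_of_eq_succ {n : ℕ} {i j : Fin (n - 1)} (h : (j : ℕ) = (i : ℕ) + 1) :
    lo j = hi i := by
  simp [hi, lo, h]

/-- Elements `t_i`, `c_i` of a ring satisfying the defining relations of `S(n) ⊗ C(n)`. -/
structure IsTensorFamily {R : Type*} [Ring R] {n : ℕ} (t : Fin (n - 1) → R) (c : Fin n → R) :
    Prop where
  t_mul_self : ∀ i, t i * t i = 1
  t_braid : ∀ i j : Fin (n - 1), (j : ℕ) = (i : ℕ) + 1 → t i * t j * t i = t j * t i * t j
  t_anticomm : ∀ i j : Fin (n - 1), (i : ℕ) + 1 < (j : ℕ) → t i * t j = -(t j * t i)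
  c_mul_self : ∀ i, c i * c i = 1
  c_anticomm : ∀ i j, i ≠ j → c i * c j = -(c j * c i)
  t_mul_c : ∀ i j, t i * c j = -(c j * t i)

/-- Elements `s_i`, `c_i` of a ring satisfying the defining relations of `W(n)`. -/
structure IsSergeevFamily {R : Type*} [Ring R] {n : ℕ} (s : Fin (n - 1) → R) (c : Fin n → R) :
    Prop where
  s_mul_self : ∀ i, s i * s i = 1
  s_braid : ∀ i j : Fin (n - 1), (j : ℕ) = (i : ℕ) + 1 → s i * s j * s i = s j * s i * s j
  s_comm : ∀ i j : Fin (n - 1), (i : ℕ) + 1 < (j : ℕ) → s i * s j = s j * s i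
  c_mul_self : ∀ i, c i * c i = 1
  c_anticomm : ∀ i j, i ≠ j → c i * c j = -(c j * c i)
  s_mul_c_lo : ∀ i, s i * c (lo i) = c (hi i) * s i
  s_mul_c_hi : ∀ i, s i * c (hi i) = c (lo i) * s i
  s_mul_c : ∀ i j, j ≠ lo i → j ≠ hi i → s i * c j = c j * s i

/-- The root `c_i - c_{i+1}` of a family `c`. -/
def root {R : Type*} [Ring R] {n : ℕ} (c : Fin n → R) (i : Fin (n - 1)) : R :=
  c (lo i) - c (hi i)

section Roots

variable {R : Type*} [Ring R] {n : ℕ} {c : Fin n → R}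

theorem root_mul_self (hc : ∀ i, c i * c i = 1) (hanti : ∀ i j, i ≠ j → c i * c j = -(c j * c i))
    (i : Fin (n - 1)) : root c i * root c i = 2 :=
  sub_mul_self_of_anticomm (hc _) (hc _) (hanti _ _ (hi_ne_lo i).symm)

theorem root_mul_root_succ (hc : ∀ i, c i * c i = 1)
    (hanti : ∀ i j, i ≠ j → c i * c j = -(c j * c i)) {i j : Fin (n - 1)}
    (h : (j : ℕ) = (i : ℕ) + 1) : root c i * root c j = -2 - root c j * root c i := by
  rw [root, root, lo_eq_hi_of_eq_succ h]
  apply sub_mul_sub_of_anticomm (hc _) <;> apply hanti <;>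
    simp only [lo, hi, ne_eq, Fin.ext_iff] <;> omega

theorem root_anticomm (hanti : ∀ i j, i ≠ j → c i * c j = -(c j * c i)) {i j : Fin (n - 1)}
    (h : (i : ℕ) + 1 < (j : ℕ)) : root c i * root c j = -(root c j * root c i) := by
  apply sub_mul_sub_of_anticomm_disjoint <;> apply hanti <;>
    simp only [lo, hi, ne_eq, Fin.ext_iff] <;> omega

theorem root_mul_c (hanti : ∀ i j, i ≠ j → c i * c j = -(c j * c i)) {i : Fin (n - 1)} {j : Fin n}
    (h1 : j ≠ lo i) (h2 : j ≠ hi i) : root c i * c j = -(c j * root c i) := by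
  rw [root, sub_mul, mul_sub, hanti _ _ h1.symm, hanti _ _ h2.symm]
  noncomm_ring

theorem root_mul_c_lo (hc : ∀ i, c i * c i = 1) (i : Fin (n - 1)) :
    root c i * c (lo i) = -(c (hi i) * root c i) := by
  simp [root, sub_mul, mul_sub, hc]

theorem root_mul_c_hi (hc : ∀ i, c i * c i = 1) (i : Fin (n - 1)) :
    root c i * c (hi i) = -(c (lo i) * root c i) := by
  simp [root, sub_mul, mul_sub, hc]

end Roots

namespace IsTensorFamily

variable {R : Type*} [Ring R] {n : ℕ} {t : Fin (n - 1) → R} {c : Fin n → R}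

theorem root_mul_t (hf : IsTensorFamily t c) (i j : Fin (n - 1)) :
    root c i * t j = -(t j * root c i) := by
  rw [root, sub_mul, mul_sub, hf.t_mul_c, hf.t_mul_c]
  noncomm_ring

theorem refl_mul_self (hf : IsTensorFamily t c) (i : Fin (n - 1)) :
    t i * root c i * (t i * root c i) = -2 := by
  calc t i * root c i * (t i * root c i) = t i * (root c i * t i) * root c i := by
        simp only [mul_assoc]
    _ = -(t i * t i * (root c i * root c i)) := by rw [hf.root_mul_t]; noncomm_ring
    _ = -2 := by rw [hf.t_mul_self, root_mul_self hf.c_mul_self hf.c_anticomm, one_mul]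

theorem refl_comm (hf : IsTensorFamily t c) {i j : Fin (n - 1)} (h : (i : ℕ) + 1 < (j : ℕ)) :
    t i * root c i * (t j * root c j) = t j * root c j * (t i * root c i) := by
  calc t i * root c i * (t j * root c j) = t i * (root c i * t j) * root c j := by
        simp only [mul_assoc]
    _ = -(t i * t j * (root c i * root c j)) := by rw [hf.root_mul_t]; noncomm_ring
    _ = t j * -(t i * root c j) * root c i := by
      rw [hf.t_anticomm i j h, root_anticomm hf.c_anticomm h]; noncomm_ring
    _ = t j * root c j * (t i * root c i) := by
      rw [← hf.root_mul_t]; simp only [mul_assoc]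

theorem refl_mul_of_root_mul (hf : IsTensorFamily t c) {i : Fin (n - 1)} {j k : Fin n}
    (h : root c i * c j = -(c k * root c i)) :
    t i * root c i * c j = c k * (t i * root c i) := by
  rw [mul_assoc, h, mul_neg, ← mul_assoc, hf.t_mul_c, neg_mul, neg_neg, mul_assoc]

/-- The elements `k t_i (c_i - c_{i+1})` with `-2 k² = 1` satisfy the relations of `W(n)`. -/
theorem isSergeevFamily {F : Type*} [Field F] [Algebra F R] (hf : IsTensorFamily t c) {k : F}
    (hk : k * k * -2 = 1) : IsSergeevFamily (fun i => k • (t i * root c i)) c where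
  s_mul_self i := by
    have htwo : (-2 : R) = algebraMap F R (-2) := by rw [map_neg, map_ofNat]
    rw [smul_mul_smul_comm, hf.refl_mul_self, htwo, Algebra.smul_def, ← map_mul, hk, map_one]
  s_braid i j h := by
    simp only [smul_mul_smul_comm]
    rw [braid_of_anticomm (hf.t_braid i j h) (root_mul_self hf.c_mul_self hf.c_anticomm i)
      (root_mul_self hf.c_mul_self hf.c_anticomm j)
      (root_mul_root_succ hf.c_mul_self hf.c_anticomm h) (hf.root_mul_t i i) (hf.root_mul_t i j)
      (hf.root_mul_t j i) (hf.root_mul_t j j)]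
  s_comm i j h := by simp only [smul_mul_smul_comm, hf.refl_comm h]
  c_mul_self := hf.c_mul_self
  c_anticomm := hf.c_anticomm
  s_mul_c_lo i := by
    rw [smul_mul_assoc, mul_smul_comm, hf.refl_mul_of_root_mul (root_mul_c_lo hf.c_mul_self i)]
  s_mul_c_hi i := by
    rw [smul_mul_assoc, mul_smul_comm, hf.refl_mul_of_root_mul (root_mul_c_hi hf.c_mul_self i)]
  s_mul_c i j h1 h2 := by
    rw [smul_mul_assoc, mul_smul_comm,
      hf.refl_mul_of_root_mul (root_mul_c hf.c_anticomm h1 h2)]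

end IsTensorFamily

namespace IsSergeevFamily

variable {R : Type*} [Ring R] {n : ℕ} {s : Fin (n - 1) → R} {c : Fin n → R}

theorem root_mul_s_self (hf : IsSergeevFamily s c) (i : Fin (n - 1)) :
    root c i * s i = -(s i * root c i) := by
  rw [root, sub_mul, mul_sub, hf.s_mul_c_lo, hf.s_mul_c_hi, neg_sub]

theorem root_mul_s_of_far (hf : IsSergeevFamily s c) {i j : Fin (n - 1)}
    (h : (i : ℕ) + 1 < (j : ℕ) ∨ (j : ℕ) + 1 < (i : ℕ)) :
    root c i * s j = s j * root c i := by
  rw [root, sub_mul, mul_sub, hf.s_mul_c, hf.s_mul_c] <;>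
    simp only [lo, hi, ne_eq, Fin.ext_iff] <;> omega

theorem refl_mul_self (hf : IsSergeevFamily s c) (i : Fin (n - 1)) :
    s i * root c i * (s i * root c i) = -2 := by
  calc s i * root c i * (s i * root c i) = s i * (root c i * s i) * root c i := by
        simp only [mul_assoc]
    _ = -(s i * s i * (root c i * root c i)) := by rw [hf.root_mul_s_self]; noncomm_ring
    _ = -2 := by rw [hf.s_mul_self, root_mul_self hf.c_mul_self hf.c_anticomm, one_mul]

theorem refl_braid (hf : IsSergeevFamily s c) {i j : Fin (n - 1)} (h : (j : ℕ) = (i : ℕ) + 1) :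
    s i * root c i * (s j * root c j) * (s i * root c i) =
      s j * root c j * (s i * root c i) * (s j * root c j) := by
  have hlo := lo_eq_hi_of_eq_succ h
  have hadd : root c i + root c j = c (lo i) - c (hi j) := by
    rw [root, root, hlo, sub_add_sub_cancel]
  have hj_lo : s j * c (hi i) = c (hi j) * s j := by rw [← hlo, hf.s_mul_c_lo]
  have hj_hi : s j * c (hi j) = c (hi i) * s j := by rw [← hlo, hf.s_mul_c_hi]
  have hj : s j * c (lo i) = c (lo i) * s j := by
    apply hf.s_mul_c <;> simp only [lo, hi, ne_eq, Fin.ext_iff] <;> omega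
  have hi' : s i * c (hi j) = c (hi j) * s i := by
    apply hf.s_mul_c <;> simp only [lo, hi, ne_eq, Fin.ext_iff] <;> omega
  apply braid_of_reflections (hf.s_braid i j h) (root_mul_self hf.c_mul_self hf.c_anticomm i)
      (root_mul_self hf.c_mul_self hf.c_anticomm j) <;>
    rw [hadd] <;>
    simp only [root, hlo, sub_mul, mul_sub, hj_lo, hj_hi, hj, hi', hf.s_mul_c_lo, hf.s_mul_c_hi]

theorem refl_anticomm (hf : IsSergeevFamily s c) {i j : Fin (n - 1)}
    (h : (i : ℕ) + 1 < (j : ℕ)) :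
    s i * root c i * (s j * root c j) = -(s j * root c j * (s i * root c i)) := by
  calc s i * root c i * (s j * root c j) = s i * (root c i * s j) * root c j := by
        simp only [mul_assoc]
    _ = s i * s j * (root c i * root c j) := by
      rw [hf.root_mul_s_of_far (Or.inl h)]; simp only [mul_assoc]
    _ = -(s j * (s i * root c j) * root c i) := by
      rw [hf.s_comm i j h, root_anticomm hf.c_anticomm h]; noncomm_ring
    _ = -(s j * root c j * (s i * root c i)) := by
      rw [← hf.root_mul_s_of_far (Or.inr h)]; simp only [mul_assoc]

theorem refl_mul_c (hf : IsSergeevFamily s c) (i : Fin (n - 1)) (j : Fin n) :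
    s i * root c i * c j = -(c j * (s i * root c i)) := by
  by_cases h1 : j = lo i
  · rw [h1, mul_assoc, root_mul_c_lo hf.c_mul_self, mul_neg, ← mul_assoc, hf.s_mul_c_hi,
      mul_assoc]
  by_cases h2 : j = hi i
  · rw [h2, mul_assoc, root_mul_c_hi hf.c_mul_self, mul_neg, ← mul_assoc, hf.s_mul_c_lo,
      mul_assoc]
  rw [mul_assoc, root_mul_c hf.c_anticomm h1 h2, mul_neg, ← mul_assoc, hf.s_mul_c i j h1 h2,
    mul_assoc]

/-- The elements `k s_i (c_i - c_{i+1})` with `-2 k² = 1` satisfy the relations of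
`S(n) ⊗ C(n)`. -/
theorem isTensorFamily {F : Type*} [Field F] [Algebra F R] (hf : IsSergeevFamily s c) {k : F}
    (hk : k * k * -2 = 1) : IsTensorFamily (fun i => k • (s i * root c i)) c where
  t_mul_self i := by
    have htwo : (-2 : R) = algebraMap F R (-2) := by rw [map_neg, map_ofNat]
    rw [smul_mul_smul_comm, hf.refl_mul_self, htwo, Algebra.smul_def, ← map_mul, hk, map_one]
  t_braid i j h := by simp only [smul_mul_smul_comm, hf.refl_braid h]
  t_anticomm i j h := by simp only [smul_mul_smul_comm, hf.refl_anticomm h, smul_neg]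
  c_mul_self := hf.c_mul_self
  c_anticomm := hf.c_anticomm
  t_mul_c i j := by rw [smul_mul_assoc, mul_smul_comm, hf.refl_mul_c, smul_neg]

end IsSergeevFamily

theorem smul_smul_mul_root_mul_root {F R : Type*} [Field F] [Ring R] [Algebra F R] {n : ℕ}
    {c : Fin n → R} (hc : ∀ i, c i * c i = 1) (hanti : ∀ i j, i ≠ j → c i * c j = -(c j * c i))
    {k l : F} (hkl : k * l * 2 = 1) (u : R) (i : Fin (n - 1)) :
    k • (l • (u * root c i) * root c i) = u := by
  have htwo : (2 : R) = algebraMap F R 2 := (map_ofNat _ 2).symm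
  rw [smul_mul_assoc, mul_assoc, root_mul_self hc hanti, smul_smul, htwo, ← Algebra.commutes,
    ← Algebra.smul_def, smul_smul, hkl, one_smul]

section Presentations

variable {F} {n : ℕ}

theorem isTensorFamily_tS_cS : IsTensorFamily (tS F n) (cS F n) where
  t_mul_self i := by simpa [tS] using RingQuot.mkAlgHom_rel F (SCRel.tt (F := F) i)
  t_braid i j h := by simpa [tS] using RingQuot.mkAlgHom_rel F (SCRel.tbraid (F := F) i j h)
  t_anticomm i j h := by simpa [tS] using RingQuot.mkAlgHom_rel F (SCRel.tfar (F := F) i j h)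
  c_mul_self i := by simpa [cS] using RingQuot.mkAlgHom_rel F (SCRel.cc (F := F) i)
  c_anticomm i j h := by simpa [cS] using RingQuot.mkAlgHom_rel F (SCRel.canti (F := F) i j h)
  t_mul_c i j := by simpa [tS, cS] using RingQuot.mkAlgHom_rel F (SCRel.tc (F := F) i j)

theorem isSergeevFamily_sW_cW : IsSergeevFamily (sW F n) (cW F n) where
  s_mul_self i := by simpa [sW] using RingQuot.mkAlgHom_rel F (WRel.ss (F := F) i)
  s_braid i j h := by simpa [sW] using RingQuot.mkAlgHom_rel F (WRel.sbraid (F := F) i j h)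
  s_comm i j h := by simpa [sW] using RingQuot.mkAlgHom_rel F (WRel.sfar (F := F) i j h)
  c_mul_self i := by simpa [cW] using RingQuot.mkAlgHom_rel F (WRel.cc (F := F) i)
  c_anticomm i j h := by simpa [cW] using RingQuot.mkAlgHom_rel F (WRel.canti (F := F) i j h)
  s_mul_c_lo i := by simpa [sW, cW] using RingQuot.mkAlgHom_rel F (WRel.sclo (F := F) i)
  s_mul_c_hi i := by simpa [sW, cW] using RingQuot.mkAlgHom_rel F (WRel.schi (F := F) i)
  s_mul_c i j h1 h2 := by
    simpa [sW, cW] using RingQuot.mkAlgHom_rel F (WRel.sco (F := F) i j h1 h2)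

variable {R : Type*} [Ring R] [Algebra F R]

theorem IsTensorFamily.exists_algHom {t : Fin (n - 1) → R} {c : Fin n → R}
    (hf : IsTensorFamily t c) :
    ∃ f : SC F n →ₐ[F] R, (∀ i, f (tS F n i) = t i) ∧ ∀ i, f (cS F n i) = c i := by
  refine ⟨RingQuot.liftAlgHom F ⟨FreeAlgebra.lift F fun
    | SCGen.t i => t i
    | SCGen.c i => c i, fun x y h => ?_⟩, fun i => ?_, fun i => ?_⟩
  · cases h with
    | tt i => simp [sct, hf.t_mul_self]
    | tbraid i j h => simp [sct, hf.t_braid i j h]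
    | tfar i j h => simp [sct, hf.t_anticomm i j h]
    | cc i => simp [scc, hf.c_mul_self]
    | canti i j h => simp [scc, hf.c_anticomm i j h]
    | tc i j => simp [sct, scc, hf.t_mul_c]
  · simp [tS, sct]
  · simp [cS, scc]

theorem IsSergeevFamily.exists_algHom {s : Fin (n - 1) → R} {c : Fin n → R}
    (hf : IsSergeevFamily s c) :
    ∃ f : W F n →ₐ[F] R, (∀ i, f (sW F n i) = s i) ∧ ∀ i, f (cW F n i) = c i := by
  refine ⟨RingQuot.liftAlgHom F ⟨FreeAlgebra.lift F fun
    | WGen.s i => s i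
    | WGen.c i => c i, fun x y h => ?_⟩, fun i => ?_, fun i => ?_⟩
  · cases h with
    | ss i => simp [ws, hf.s_mul_self]
    | sbraid i j h => simp [ws, hf.s_braid i j h]
    | sfar i j h => simp [ws, hf.s_comm i j h]
    | cc i => simp [wc, hf.c_mul_self]
    | canti i j h => simp [wc, hf.c_anticomm i j h]
    | sclo i => simp [ws, wc, hf.s_mul_c_lo]
    | schi i => simp [ws, wc, hf.s_mul_c_hi]
    | sco i j h1 h2 => simp [ws, wc, hf.s_mul_c i j h1 h2]
  · simp [sW, ws]
  · simp [cW, wc]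

theorem SC.algHom_ext {f g : SC F n →ₐ[F] R} (ht : ∀ i, f (tS F n i) = g (tS F n i))
    (hc : ∀ i, f (cS F n i) = g (cS F n i)) : f = g := by
  ext x
  cases x with
  | t i => exact ht i
  | c i => exact hc i

theorem W.algHom_ext {f g : W F n →ₐ[F] R} (hs : ∀ i, f (sW F n i) = g (sW F n i))
    (hc : ∀ i, f (cW F n i) = g (cW F n i)) : f = g := by
  ext x
  cases x with
  | s i => exact hs i
  | c i => exact hc i

end Presentations

/-- **Sergeev's isomorphism** (Lemma `TW` of Brundan–Kleshchev, after Sergeev):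
there is an isomorphism of superalgebras `φ : S(n) ⊗ C(n) → W(n)` with
`φ(1 ⊗ c_i) = c_i` and `φ(t_j ⊗ 1) = (1/√(-2)) s_j (c_j - c_{j+1})`, where
`r = √(-2)` is a fixed square root of `-2` in `F`. -/
theorem sergeev_isomorphism
    (F : Type) [Field F] [IsAlgClosed F] (h2 : (2 : F) ≠ 0)
    (n : ℕ) (r : F) (hr : r * r = -2) :
    ∃ φ : SC F n ≃ₐ[F] W F n,
      (∀ i : Fin n, φ (cS F n i) = cW F n i) ∧
      ∀ j : Fin (n - 1),
        φ (tS F n j) = r⁻¹ • (sW F n j * (cW F n (lo j) - cW F n (hi j))) := by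
  have hr0 : r ≠ 0 := by
    rintro rfl
    exact h2 (by simpa using hr.symm)
  have hinv : r⁻¹ * r⁻¹ * -2 = 1 := by
    rw [← mul_inv, hr, inv_mul_cancel₀ (neg_ne_zero.mpr h2)]
  have hhalf : r / 2 * (r / 2) * -2 = 1 := by
    rw [div_mul_div_comm, hr]
    field_simp
  have hS : IsTensorFamily (tS F n) (cS F n) := isTensorFamily_tS_cS
  have hW : IsSergeevFamily (sW F n) (cW F n) := isSergeevFamily_sW_cW
  obtain ⟨f, hft, hfc⟩ := (hW.isTensorFamily hinv).exists_algHom (F := F)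
  obtain ⟨g, hgs, hgc⟩ := (hS.isSergeevFamily hhalf).exists_algHom (F := F)
  have hfroot (i : Fin (n - 1)) : f (root (cS F n) i) = root (cW F n) i := by
    rw [root, map_sub, hfc, hfc, root]
  have hgroot (i : Fin (n - 1)) : g (root (cW F n) i) = root (cS F n) i := by
    rw [root, map_sub, hgc, hgc, root]
  refine ⟨AlgEquiv.ofAlgHom f g (W.algHom_ext (fun i => ?_) fun i => ?_)
    (SC.algHom_ext (fun i => ?_) fun i => ?_), hfc, hft⟩
  · rw [AlgHom.comp_apply, hgs, map_smul, map_mul, hft, hfroot, AlgHom.id_apply]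
    exact smul_smul_mul_root_mul_root hW.c_mul_self hW.c_anticomm (by field_simp) _ i
  · rw [AlgHom.comp_apply, hgc, hfc, AlgHom.id_apply]
  · rw [AlgHom.comp_apply, hft, map_smul, map_mul, hgs, hgroot, AlgHom.id_apply]
    exact smul_smul_mul_root_mul_root hS.c_mul_self hS.c_anticomm (by field_simp) _ i
  · rw [AlgHom.comp_apply, hfc, hgc, AlgHom.id_apply]

end HC
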